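/- Let (p_k)_{k≥1} be strictly positive reals with ∑_k p_k = 1 and counting function ρ*(x) = #{k : p_k ≥ x} satisfying ρ*(x) ∼ x^{−α} ℓ(1/x) as x ↓ 0 for some α ∈ (0,1] and some ℓ slowly varying at infinity. Let q : (0,∞) → ℕ be a function of class 𝒬. Consider the Poissonized Karlin occupancy scheme with frequencies (p_k) and set K_{≥r}(t) = ∑_k 1{Z_{t,k} ≥ r}. Then (q(t))^α K_{≥q(t)}(t) / (t^α ℓ(t/q(t))) → 1 in probability as t → ∞, i.e. for every ε > 0, P{ |(q(t))^α K_{≥q(t)}(t) / (t^α ℓ(t/q(t))) − 1| > ε } → 0. -/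

import Mathlib

open MeasureTheory Set Filter Real

lemma K_mono (u w : ℝ) (hw : 0 < w) (h : (u ≤ w ∧ w ≤ 1) ∨ (w ≤ u ∧ 1 ≤ w)) :
    u * exp (1 - u) ≤ w * exp (1 - w) := by
  have h1 : (u - w) / w ≤ u - w := by
    rw [div_le_iff₀ hw]
    rcases h with ⟨a, b⟩ | ⟨a, b⟩ <;> nlinarith
  have h2 : u / w ≤ exp (u - w) := by
    have : u / w = (u - w) / w + 1 := by field_simp; ring
    rw [this]
    exact (Real.add_one_le_exp _).trans (exp_le_exp.2 h1)
  rw [div_le_iff₀ hw] at h2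
  have h3 : exp (u - w) * exp (1 - u) = exp (1 - w) := by rw [← exp_add]; congr 1; ring
  calc u * exp (1 - u) ≤ (exp (u - w) * w) * exp (1 - u) := by gcongr
    _ = w * (exp (u - w) * exp (1 - u)) := by ring
    _ = _ := by rw [h3]

lemma K_lt_one (w : ℝ) (hw : w ≠ 1) : w * exp (1 - w) < 1 := by
  have h := Real.add_one_lt_exp (x := w - 1) (by intro h; apply hw; linarith)
  have h3 : exp (w - 1) * exp (1 - w) = 1 := by rw [← exp_add]; simp
  have h4 : w < exp (w - 1) := by linarith
  exact (mul_lt_mul_of_pos_right h4 (exp_pos (1 - w))).trans_eq h3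

lemma K_chernoff {Ω : Type*} [MeasurableSpace Ω] (P : Measure Ω) (Z : Ω → ℕ) (l : ℝ) (hl : 0 < l)
    (hZ : ∀ n, P {ω | Z ω = n} = ENNReal.ofReal (Real.exp (-l) * l ^ n / Nat.factorial n))
    (r : ℕ) (hr : 0 < r) (u : ℝ) (hu : l = u * r) (E : Set ℕ)
    (hE : ∀ n ∈ E, u ^ n ≤ u ^ r) :
    P {ω | Z ω ∈ E} ≤ ENNReal.ofReal ((u * exp (1 - u)) ^ r) := by
  have hr' : (0:ℝ) < r := by exact_mod_cast hr
  have hu0 : 0 < u := by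
    by_contra h
    push Not at h
    nlinarith
  have hs : HasSum (fun n : ℕ => Real.exp (-l) * u ^ r * ((r:ℝ) ^ n / Nat.factorial n))
      (Real.exp (-l) * u ^ r * exp r) := by
    have := NormedSpace.expSeries_div_hasSum_exp (r:ℝ)
    rw [← Real.exp_eq_exp_ℝ] at this
    exact this.mul_left _
  have he : Real.exp (-l) * u ^ r * exp r = (u * exp (1 - u)) ^ r := by
    rw [mul_pow, ← exp_nat_mul, mul_right_comm, ← exp_add, mul_comm, hu]
    congr 2; ring
  rw [← he, ← hs.tsum_eq, ENNReal.ofReal_tsum_of_nonneg (fun n => by positivity) hs.summable]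
  have : {ω | Z ω ∈ E} ⊆ ⋃ n : ℕ, {ω | Z ω = n ∧ n ∈ E} := by
    intro ω h
    simp only [mem_iUnion, mem_ofPred_eq]
    exact ⟨Z ω, rfl, h⟩
  refine (measure_mono this).trans ((measure_iUnion_le _).trans ?_)
  refine ENNReal.tsum_le_tsum fun n => ?_
  by_cases hn : n ∈ E
  · simp only [hn, and_true]
    rw [hZ]
    apply ENNReal.ofReal_le_ofReal
    have := hE n hn
    rw [mul_div_assoc, mul_assoc]
    nth_rewrite 2 [hu]
    rw [mul_pow, mul_div_assoc]
    gcongr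
  · simp [hn]

lemma K_encard (S : Set ℕ) [DecidablePred (· ∈ S)] :
    (∑' k, (if k ∈ S then (1:ENNReal) else 0)) = (S.encard : ENNReal) := by
  rw [← ENNReal.tsum_set_one, tsum_subtype S (fun _ => (1:ENNReal))]
  congr 1; ext k; simp [Set.indicator]

lemma K_fin (S : Set ℕ) (a : ℝ) (ha : 0 ≤ a) (h : (S.encard : ENNReal) ≤ ENNReal.ofReal a) :
    S.Finite ∧ (S.ncard : ℝ) ≤ a := by
  have hf : S.Finite := by
    rw [← Set.encard_ne_top_iff]
    intro h'
    rw [h'] at h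
    simp at h
  refine ⟨hf, ?_⟩
  rw [← hf.cast_ncard_eq] at h
  simp only [ENat.toENNReal_coe] at h
  rw [← ENNReal.ofReal_natCast] at h
  exact (ENNReal.ofReal_le_ofReal_iff ha).1 h

lemma K_pfin (p : ℕ → ℝ) (hpsum : Summable p) (x : ℝ) (hx : 0 < x) : {k : ℕ | x ≤ p k}.Finite := by
  have := hpsum.tendsto_cofinite_zero.eventually (gt_mem_nhds hx)
  rw [Filter.eventually_cofinite] at this
  simpa using this

/-- dyadic bound -/
lemma K_dyadic (p : ℕ → ℝ) (hp : ∀ k, 0 < p k) (hpsum : Summable p) (s0 : ℝ) (hs0 : 0 < s0)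
    (hd : ∀ s ≥ s0, (({k : ℕ | 1 / (2 * s) ≤ p k}.ncard : ℝ)) ≤ 3 * {k : ℕ | 1 / s ≤ p k}.ncard)
    (s : ℝ) (hs : s0 ≤ s) :
    (∑' k, (if p k * s < 1 then ENNReal.ofReal ((p k * s) ^ 2) else 0)) ≤
      ENNReal.ofReal (12 * {k : ℕ | 1 / s ≤ p k}.ncard) := by
  classical
  have hspos : 0 < s := hs0.trans_le hs
  set A : ℝ := ({k : ℕ | 1 / s ≤ p k}.ncard : ℝ) with hA
  have hA0 : 0 ≤ A := by positivity
  have hit : ∀ j : ℕ, ({k : ℕ | 1 / (2 ^ j * s) ≤ p k}.ncard : ℝ) ≤ 3 ^ j * A := by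
    intro j
    induction j with
    | zero => simp [hA]
    | succ j ih =>
      have h1 : s0 ≤ 2 ^ j * s := hs.trans (le_mul_of_one_le_left hspos.le (one_le_pow₀ (by norm_num)))
      have := hd _ h1
      rw [← mul_assoc, ← pow_succ'] at this
      calc _ ≤ _ := this
        _ ≤ 3 * (3 ^ j * A) := by gcongr
        _ = _ := by ring
  have hpt : ∀ k, (if p k * s < 1 then ENNReal.ofReal ((p k * s) ^ 2) else 0) ≤
      ∑' j : ℕ, ENNReal.ofReal ((1/4) ^ j) *
        (if k ∈ {k : ℕ | 1 / (2 ^ (j+1) * s) ≤ p k} then (1:ENNReal) else 0) := by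
    intro k
    split_ifs with h
    · have hpk := hp k
      have hps : 0 < p k * s := by positivity
      obtain ⟨n, hn1, hn2⟩ := exists_nat_pow_near (x := 1 / (p k * s)) (y := (2:ℝ))
        (by rw [le_div_iff₀ hps]; linarith) (by norm_num)
      refine le_trans ?_ (ENNReal.le_tsum n)
      have hm : k ∈ {k : ℕ | 1 / (2 ^ (n+1) * s) ≤ p k} := by
        simp only [mem_ofPred_eq]
        rw [div_lt_iff₀ hps] at hn2
        rw [div_le_iff₀ (by positivity)]
        nlinarith
      rw [if_pos hm, mul_one]
      apply ENNReal.ofReal_le_ofReal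
      have : (1/4:ℝ) ^ n = ((1 / 2 ^ n)) ^ 2 := by
        rw [div_pow, div_pow, ← pow_mul, mul_comm n 2, pow_mul]; norm_num
      rw [this]
      rw [le_div_iff₀ hps] at hn1
      have : p k * s ≤ 1 / 2 ^ n := by
        rw [le_div_iff₀ (by positivity)]; linarith
      gcongr
    · exact zero_le
  have hg : HasSum (fun j : ℕ => 3 * A * (3/4 : ℝ) ^ j) (3 * A * (1 - 3/4)⁻¹) :=
    (hasSum_geometric_of_lt_one (by norm_num) (by norm_num)).mul_left _
  have h12 : 12 * A = 3 * A * (1 - 3/4)⁻¹ := by norm_num; ring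
  rw [h12, ← hg.tsum_eq, ENNReal.ofReal_tsum_of_nonneg (fun n => by positivity) hg.summable]
  refine (ENNReal.tsum_le_tsum hpt).trans ?_
  rw [ENNReal.tsum_comm]
  refine ENNReal.tsum_le_tsum fun j => ?_
  rw [ENNReal.tsum_mul_left, K_encard]
  have hf := K_pfin p hpsum (1 / (2 ^ (j+1) * s)) (by positivity)
  rw [← hf.cast_ncard_eq, ENat.toENNReal_coe, ← ENNReal.ofReal_natCast, ← ENNReal.ofReal_mul (by positivity)]
  apply ENNReal.ofReal_le_ofReal
  calc _ ≤ (1/4:ℝ) ^ j * (3 ^ (j+1) * A) := by gcongr; exact hit _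
    _ = _ := by rw [div_pow, div_pow, pow_succ]; ring

lemma K_markov {Ω : Type*} [MeasurableSpace Ω] (P : Measure Ω) (S : Ω → Set ℕ)
    (hm : ∀ k, MeasurableSet {ω | k ∈ S ω}) (a B : ℝ) (ha : 0 < a)
    (hB : (∑' k, P {ω | k ∈ S ω}) ≤ ENNReal.ofReal B) :
    P {ω | ¬ ((S ω).Finite ∧ ((S ω).ncard : ℝ) ≤ a)} ≤ ENNReal.ofReal (B / a) := by
  classical
  have hmeas : ∀ k, Measurable (fun ω => if k ∈ S ω then (1:ENNReal) else 0) := fun k =>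
    Measurable.ite (hm k) measurable_const measurable_const
  have hX : Measurable (fun ω => ∑' k, if k ∈ S ω then (1:ENNReal) else 0) :=
    Measurable.ennreal_tsum hmeas
  have h1 : {ω | ¬ ((S ω).Finite ∧ ((S ω).ncard : ℝ) ≤ a)} ⊆
      {ω | ENNReal.ofReal a ≤ ∑' k, if k ∈ S ω then (1:ENNReal) else 0} := by
    intro ω h
    simp only [mem_ofPred_eq] at h ⊢
    by_contra h2
    push Not at h2
    rw [K_encard] at h2
    exact h (K_fin _ a ha.le h2.le)
  refine (measure_mono h1).trans ?_
  refine (meas_ge_le_lintegral_div hX.aemeasurable (by simpa using ha) ENNReal.ofReal_ne_top).trans ?_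
  rw [ENNReal.ofReal_div_of_pos ha]
  gcongr
  rw [lintegral_tsum (fun k => (hmeas k).aemeasurable)]
  refine le_trans (ENNReal.tsum_le_tsum fun k => ?_) hB
  have : (fun ω => if k ∈ S ω then (1:ENNReal) else 0) = Set.indicator {ω | k ∈ S ω} 1 := by
    ext ω; simp [Set.indicator]
  rw [this, lintegral_indicator_one (hm k)]

lemma K_event {Ω : Type*} [MeasurableSpace Ω] (P : Measure Ω)
    (p : ℕ → ℝ) (hp : ∀ k, 0 < p k) (hpsum : Summable p) (s0 : ℝ) (hs0 : 0 < s0)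
    (hd : ∀ s ≥ s0, (({k : ℕ | 1 / (2 * s) ≤ p k}.ncard : ℝ)) ≤ 3 * {k : ℕ | 1 / s ≤ p k}.ncard)
    (Z : ℕ → Ω → ℕ) (hZm : ∀ k, Measurable (Z k)) (t : ℝ) (ht : 0 < t)
    (hZ : ∀ k n, P {ω | Z k ω = n} =
        ENNReal.ofReal (Real.exp (-(p k * t)) * (p k * t) ^ n / Nat.factorial n))
    (r : ℕ) (hr : 2 ≤ r) (s : ℝ) (hst : t = s * r) (hs : s0 ≤ s) (δ : ℝ) (hδ : 0 < δ) (hδ1 : δ < 1)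
    (A : ℝ) (hA : A = {k : ℕ | 1 / s ≤ p k}.ncard) (hApos : 0 < A) :
    P {ω | ¬ (({k : ℕ | (1 + δ) / s ≤ p k}.ncard : ℝ) - δ * A ≤ {k : ℕ | r ≤ Z k ω}.ncard ∧
      ({k : ℕ | r ≤ Z k ω}.ncard : ℝ) ≤ {k : ℕ | (1 - δ) / s ≤ p k}.ncard + δ * A)} ≤
    ENNReal.ofReal (12 * exp 1 ^ 2 * ((1 - δ) * exp (1 - (1 - δ))) ^ (r - 2) / δ) +
    ENNReal.ofReal (((1 + δ) * exp (1 - (1 + δ))) ^ r / δ) := by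
  classical
  have hspos : 0 < s := hs0.trans_le hs
  set η := (1 - δ) * exp (1 - (1 - δ)) with hη
  set c := (1 + δ) * exp (1 - (1 + δ)) with hc
  have hη0 : 0 < η := mul_pos (by linarith) (exp_pos _)
  have hc0 : 0 < c := by positivity
  have hX := K_markov P (fun ω => {k | p k * s < 1 - δ ∧ r ≤ Z k ω})
    (fun k => by
      have : MeasurableSet {ω | r ≤ Z k ω} := measurableSet_le measurable_const (hZm k)
      simp only [mem_ofPred_eq]
      exact (MeasurableSet.const _).inter this)
    (δ * A) (exp 1 ^ 2 * η ^ (r - 2) * (12 * A)) (by positivity) (by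
      rw [ENNReal.ofReal_mul (by positivity), hA]
      refine le_trans ?_ (mul_le_mul_right (K_dyadic p hp hpsum s0 hs0 hd s hs) _)
      rw [← ENNReal.tsum_mul_left]
      refine ENNReal.tsum_le_tsum fun k => ?_
      simp only [mem_ofPred_eq]
      have hpk := hp k
      have hu0 : 0 < p k * s := by positivity
      by_cases h : p k * s < 1 - δ
      · simp only [h, true_and]
        rw [if_pos (by linarith), ← ENNReal.ofReal_mul (by positivity)]
        have := K_chernoff P (Z k) (p k * t) (by positivity) (hZ k) r (by omega) (p k * s)
          (by rw [hst]; ring) {n | r ≤ n}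
          (fun n hn => pow_le_pow_of_le_one hu0.le (by linarith) hn)
        refine this.trans (ENNReal.ofReal_le_ofReal ?_)
        obtain ⟨m, rfl⟩ := Nat.exists_eq_add_of_le hr
        rw [Nat.add_sub_cancel_left, pow_add]
        have h1 := K_mono (p k * s) (1 - δ) (by linarith) (Or.inl ⟨h.le, by linarith⟩)
        have h2 : exp (1 - p k * s) ≤ exp 1 := exp_le_exp.2 (by linarith)
        calc _ ≤ (p k * s * exp 1) ^ 2 * η ^ m := by gcongr
          _ = _ := by ring
      · simp [h])
  have hY := K_markov P (fun ω => {k | 1 + δ ≤ p k * s ∧ Z k ω < r})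
    (fun k => by
      have : MeasurableSet {ω | Z k ω < r} := measurableSet_lt (hZm k) measurable_const
      simp only [mem_ofPred_eq]
      exact (MeasurableSet.const _).inter this)
    (δ * A) (c ^ r * A) (by positivity) (by
      rw [ENNReal.ofReal_mul (by positivity), hA]
      have hf := K_pfin p hpsum (1 / s) (by positivity)
      rw [ENNReal.ofReal_natCast, ← ENat.toENNReal_coe, hf.cast_ncard_eq, ← K_encard,
        ← ENNReal.tsum_mul_left]
      refine ENNReal.tsum_le_tsum fun k => ?_
      simp only [mem_ofPred_eq]
      have hpk := hp k
      have hu0 : 0 < p k * s := by positivity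
      by_cases h : 1 + δ ≤ p k * s
      · simp only [h, true_and]
        rw [if_pos (by rw [div_le_iff₀ hspos]; linarith), mul_one]
        have := K_chernoff P (Z k) (p k * t) (by positivity) (hZ k) r (by omega) (p k * s)
          (by rw [hst]; ring) {n | n < r}
          (fun n hn => pow_le_pow_right₀ (by linarith) (le_of_lt hn))
        refine this.trans (ENNReal.ofReal_le_ofReal ?_)
        have h1 := K_mono (p k * s) (1 + δ) (by linarith) (Or.inr ⟨h, by linarith⟩)
        gcongr
      · simp [h])
  have e1 : exp 1 ^ 2 * η ^ (r - 2) * (12 * A) / (δ * A) = 12 * exp 1 ^ 2 * η ^ (r - 2) / δ := by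
    field_simp
  have e2 : c ^ r * A / (δ * A) = c ^ r / δ := by field_simp
  rw [e1] at hX
  rw [e2] at hY
  refine le_trans ?_ (add_le_add hX hY)
  refine le_trans (measure_mono ?_) (measure_union_le _ _)
  intro ω hω
  by_contra hcon
  simp only [mem_union, mem_ofPred_eq, not_or, not_not] at hcon
  obtain ⟨⟨f1, b1⟩, f2, b2⟩ := hcon
  apply hω
  have fM := K_pfin p hpsum ((1 - δ) / s) (div_pos (by linarith) hspos)
  have fG := K_pfin p hpsum ((1 + δ) / s) (by positivity)
  have sub1 : {k : ℕ | r ≤ Z k ω} ⊆ {k : ℕ | (1 - δ) / s ≤ p k} ∪ {k | p k * s < 1 - δ ∧ r ≤ Z k ω} := by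
    intro k hk
    simp only [mem_union, mem_ofPred_eq] at hk ⊢
    rw [div_le_iff₀ hspos]
    by_cases h : p k * s < 1 - δ
    · exact Or.inr ⟨h, hk⟩
    · exact Or.inl (not_lt.1 h)
  have fK : {k : ℕ | r ≤ Z k ω}.Finite := (fM.union f1).subset sub1
  have sub2 : {k : ℕ | (1 + δ) / s ≤ p k} ⊆ {k : ℕ | r ≤ Z k ω} ∪ {k | 1 + δ ≤ p k * s ∧ Z k ω < r} := by
    intro k hk
    simp only [mem_union, mem_ofPred_eq] at hk ⊢
    rw [div_le_iff₀ hspos] at hk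
    by_cases h : Z k ω < r
    · exact Or.inr ⟨hk, h⟩
    · exact Or.inl (not_lt.1 h)
  have n1 := (Set.ncard_le_ncard sub1 (fM.union f1)).trans (Set.ncard_union_le _ _)
  have n2 := (Set.ncard_le_ncard sub2 (fK.union f2)).trans (Set.ncard_union_le _ _)
  have n1' : ({k : ℕ | r ≤ Z k ω}.ncard : ℝ) ≤ {k : ℕ | (1 - δ) / s ≤ p k}.ncard +
    {k | p k * s < 1 - δ ∧ r ≤ Z k ω}.ncard := by exact_mod_cast n1
  have n2' : ({k : ℕ | (1 + δ) / s ≤ p k}.ncard : ℝ) ≤ {k : ℕ | r ≤ Z k ω}.ncard +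
    {k | 1 + δ ≤ p k * s ∧ Z k ω < r}.ncard := by exact_mod_cast n2
  constructor <;> linarith

lemma K_rv (p : ℕ → ℝ) (α : ℝ)
    (ℓ : ℝ → ℝ) (hℓpos : ∀ x : ℝ, 0 < x → 0 < ℓ x)
    (hℓsv : ∀ c : ℝ, 0 < c → Tendsto (fun t => ℓ (c * t) / ℓ t) atTop (nhds 1))
    (hρ : Tendsto (fun x => (Nat.card {k : ℕ | x ≤ p k} : ℝ) / (x ^ (-α) * ℓ (1 / x)))
      (nhdsWithin 0 (Set.Ioi 0)) (nhds 1)) (c : ℝ) (hc : 0 < c) :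
    Tendsto (fun s => ({k : ℕ | c / s ≤ p k}.ncard : ℝ) / (s ^ α * ℓ s)) atTop (nhds (c ^ (-α))) := by
  have h0 : Tendsto (fun s : ℝ => c / s) atTop (nhdsWithin 0 (Set.Ioi 0)) := by
    rw [tendsto_nhdsWithin_iff]
    refine ⟨tendsto_const_nhds.div_atTop tendsto_id, ?_⟩
    filter_upwards [eventually_gt_atTop 0] with s hs
    exact div_pos hc hs
  have h1 := ((hρ.comp h0).mul (hℓsv c⁻¹ (by positivity))).mul_const (c ^ (-α))
  simp only [one_mul] at h1
  refine h1.congr' ?_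
  filter_upwards [eventually_gt_atTop 0] with s hs
  simp only [Function.comp_apply]
  have e1 : (c / s) ^ (-α) = c ^ (-α) * s ^ α := by
    rw [Real.div_rpow hc.le hs.le, Real.rpow_neg hs.le]; simp
  have e2 : 1 / (c / s) = c⁻¹ * s := by field_simp
  rw [e1, e2, Nat.card_coe_set_eq]
  have := hℓpos s hs
  have := hℓpos (c⁻¹ * s) (by positivity)
  have := Real.rpow_pos_of_pos hc (-α)
  have := Real.rpow_pos_of_pos hs α
  generalize ℓ (c⁻¹ * s) = y at *
  field_simp

/-- Proposition 5.3 (Poissonized version of Theorem 1.5, deterministic frequencies):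
if `ρ*(x) = #{k : p_k ≥ x} ∼ x^(-α) ℓ(1/x)` as `x ↓ 0` and `q : (0,∞) → ℕ` is of class `𝒬`,
then `q(t)^α K_{≥q(t)}(t) / (t^α ℓ(t/q(t))) → 1` in probability as `t → ∞`. -/
theorem stmt_18
    {Ω : Type*} [MeasurableSpace Ω] (P : Measure Ω) [IsProbabilityMeasure P]
    (p : ℕ → ℝ) (hp : ∀ k, 0 < p k) (hpsum : Summable p) (hp1 : ∑' k, p k = 1)
    (α : ℝ) (hα : α ∈ Set.Ioc (0:ℝ) 1)
    (ℓ : ℝ → ℝ) (hℓpos : ∀ x : ℝ, 0 < x → 0 < ℓ x)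
    (hℓsv : ∀ c : ℝ, 0 < c → Tendsto (fun t => ℓ (c * t) / ℓ t) atTop (nhds 1))
    (hρ : Tendsto (fun x => (Nat.card {k : ℕ | x ≤ p k} : ℝ) / (x ^ (-α) * ℓ (1 / x)))
      (nhdsWithin 0 (Set.Ioi 0)) (nhds 1))
    (q : ℝ → ℕ)
    (hqtop : Tendsto (fun t => (q t : ℝ)) atTop atTop)
    (hqsmall : Tendsto (fun t => (q t : ℝ) / t) atTop (nhds 0))
    -- the Poissonized occupancy scheme:
    (Z : ℝ → ℕ → Ω → ℕ) (hZmeas : ∀ t k, Measurable (Z t k))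
    (hZindep : ∀ t : ℝ, 0 < t →
      ProbabilityTheory.iIndepFun (fun k => Z t k) P)
    (hZdist : ∀ t : ℝ, 0 < t → ∀ k n,
      P {ω | Z t k ω = n} =
        ENNReal.ofReal (Real.exp (-(p k * t)) * (p k * t) ^ n / Nat.factorial n)) :
    ∀ ε : ℝ, 0 < ε →
      Tendsto (fun t =>
          (P {ω | ε < |(q t : ℝ) ^ α *
              (Nat.card {k : ℕ | q t ≤ Z t k ω} : ℝ) / (t ^ α * ℓ (t / q t)) - 1|}).toReal)
        atTop (nhds 0) := by
  classical
  intro ε hε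
  have hrv := K_rv p α ℓ hℓpos hℓsv hρ
  obtain ⟨hα0, hα1⟩ := hα
  -- doubling
  have hdb : ∃ s0 : ℝ, 0 < s0 ∧ (∀ s ≥ s0, (({k : ℕ | 1 / (2 * s) ≤ p k}.ncard : ℝ)) ≤
      3 * {k : ℕ | 1 / s ≤ p k}.ncard) := by
    have h2 : (1/2:ℝ) ^ (-α) < 5/2 := by
      rw [one_div, Real.inv_rpow (by norm_num), Real.rpow_neg (by norm_num), inv_inv]
      calc (2:ℝ) ^ α ≤ 2 ^ (1:ℝ) := Real.rpow_le_rpow_of_exponent_le (by norm_num) hα1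
        _ < 5/2 := by norm_num
    have a1 := (hrv (1/2) (by norm_num)).eventually (gt_mem_nhds h2)
    have a2 := (hrv 1 (by norm_num)).eventually (lt_mem_nhds (a := 5/6) (by
      rw [Real.one_rpow]; norm_num))
    obtain ⟨s0, h0⟩ := (a1.and (a2.and (eventually_gt_atTop 0))).exists_forall_of_atTop
    refine ⟨max s0 1, by positivity, fun s hs => ?_⟩
    obtain ⟨b1, b2, b3⟩ := h0 s ((le_max_left _ _).trans hs)
    have hL : 0 < s ^ α * ℓ s := mul_pos (Real.rpow_pos_of_pos b3 α) (hℓpos s b3)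
    rw [div_lt_iff₀ hL] at b1
    rw [lt_div_iff₀ hL] at b2
    have e : 1 / (2 * s) = 1 / 2 / s := by field_simp
    rw [e]
    linarith
  obtain ⟨s0, hs0, hd⟩ := hdb
  -- choice of δ
  have hδ : ∃ δ : ℝ, 0 < δ ∧ δ < 1 ∧ 1 - ε < (1 + δ) ^ (-α) - δ * 1 ∧ (1 - δ) ^ (-α) + δ * 1 < 1 + ε := by
    have c1 : Tendsto (fun δ : ℝ => (1 + δ) ^ (-α) - δ * 1) (nhdsWithin 0 (Ioi 0)) (nhds 1) := by
      have : ContinuousAt (fun δ : ℝ => (1 + δ) ^ (-α) - δ * 1) 0 := by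
        refine ContinuousAt.sub (ContinuousAt.rpow_const (by fun_prop) (by simp)) (by fun_prop)
      have := this.tendsto
      simp only [add_zero, Real.one_rpow, zero_mul, sub_zero] at this
      exact this.mono_left nhdsWithin_le_nhds
    have c2 : Tendsto (fun δ : ℝ => (1 - δ) ^ (-α) + δ * 1) (nhdsWithin 0 (Ioi 0)) (nhds 1) := by
      have : ContinuousAt (fun δ : ℝ => (1 - δ) ^ (-α) + δ * 1) 0 := by
        refine ContinuousAt.add (ContinuousAt.rpow_const (by fun_prop) (by simp)) (by fun_prop)
      have := this.tendsto
      simp only [add_zero, Real.one_rpow, zero_mul, sub_zero] at this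
      exact this.mono_left nhdsWithin_le_nhds
    have c3 : ∀ᶠ δ : ℝ in nhdsWithin 0 (Ioi 0), δ < 1 :=
      nhdsWithin_le_nhds (gt_mem_nhds (by norm_num))
    have c4 : ∀ᶠ δ : ℝ in nhdsWithin 0 (Ioi 0), 0 < δ := self_mem_nhdsWithin
    exact (c4.and (c3.and ((c1.eventually (lt_mem_nhds (by linarith))).and
      (c2.eventually (gt_mem_nhds (by linarith)))))).exists
  obtain ⟨δ, hδ0, hδ1, hlo, hhi⟩ := hδ
  -- s = t / q t tends to infinity
  have hq2 : ∀ᶠ t in atTop, 2 ≤ q t := by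
    filter_upwards [hqtop.eventually_ge_atTop 2] with t ht
    exact_mod_cast ht
  have hs : Tendsto (fun t => t / (q t : ℝ)) atTop atTop := by
    have : Tendsto (fun t => (q t : ℝ) / t) atTop (nhdsWithin 0 (Ioi 0)) := by
      rw [tendsto_nhdsWithin_iff]
      refine ⟨hqsmall, ?_⟩
      filter_upwards [hq2, eventually_gt_atTop 0] with t h1 h2
      have : (0:ℝ) < q t := by exact_mod_cast (by omega : 0 < q t)
      exact div_pos this h2
    refine this.inv_tendsto_nhdsGT_zero.congr fun t => ?_
    simp
  have g0 := hrv 1 one_pos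
  rw [Real.one_rpow] at g0
  have g1 := ((hrv (1 + δ) (by linarith)).sub (g0.const_mul δ)).eventually (lt_mem_nhds hlo)
  have g2 := ((hrv (1 - δ) (by linarith)).add (g0.const_mul δ)).eventually (gt_mem_nhds hhi)
  have g3 := g0.eventually (lt_mem_nhds (by norm_num : (0:ℝ) < 1))
  have hqn : Tendsto q atTop atTop := tendsto_natCast_atTop_iff.1 hqtop
  have hB : Tendsto (fun t => 12 * exp 1 ^ 2 * ((1 - δ) * exp (1 - (1 - δ))) ^ (q t - 2) / δ +
      ((1 + δ) * exp (1 - (1 + δ))) ^ (q t) / δ) atTop (nhds 0) := by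
    have l1 := tendsto_pow_atTop_nhds_zero_of_lt_one
      (mul_nonneg (by linarith) (exp_pos _).le : (0:ℝ) ≤ (1 - δ) * exp (1 - (1 - δ)))
      (K_lt_one (1 - δ) (by linarith))
    have l2 := tendsto_pow_atTop_nhds_zero_of_lt_one
      (by positivity : (0:ℝ) ≤ (1 + δ) * exp (1 - (1 + δ)))
      (K_lt_one (1 + δ) (by linarith))
    have l1' := ((l1.comp ((tendsto_sub_atTop_nat 2).comp hqn)).const_mul (12 * exp 1 ^ 2)).div_const δ
    have l2' := (l2.comp hqn).div_const δ
    simpa using l1'.add l2'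
  refine squeeze_zero' (Eventually.of_forall fun t => ENNReal.toReal_nonneg) ?_ hB
  filter_upwards [hq2, eventually_gt_atTop 0, hs.eventually g1, hs.eventually g2, hs.eventually g3,
    hs.eventually_ge_atTop s0] with t hq ht b1 b2 b3 hst
  have hqpos : (0:ℝ) < q t := by exact_mod_cast (by omega : 0 < q t)
  set s := t / (q t : ℝ) with hsdef
  have hspos : 0 < s := by positivity
  have hL : 0 < s ^ α * ℓ s := mul_pos (Real.rpow_pos_of_pos hspos α) (hℓpos s hspos)
  have hApos : (0:ℝ) < {k : ℕ | 1 / s ≤ p k}.ncard := by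
    rw [lt_div_iff₀ hL] at b3; linarith
  have key := K_event P p hp hpsum s0 hs0 hd (Z t) (hZmeas t) t ht (hZdist t ht) (q t) hq s
    (by rw [hsdef]; field_simp) hst δ hδ0 hδ1 _ rfl hApos
  have p1 : 0 ≤ (1 - δ) * exp (1 - (1 - δ)) := mul_nonneg (by linarith) (exp_pos _).le
  rw [← ENNReal.ofReal_add (by positivity) (by positivity)] at key
  refine ENNReal.toReal_le_of_le_ofReal (by positivity) (le_trans (measure_mono ?_) key)
  intro ω hω hgood
  simp only [mem_ofPred_eq] at hω hgood
  obtain ⟨k1, k2⟩ := hgood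
  have e : (q t : ℝ) ^ α * (Nat.card {k : ℕ | q t ≤ Z t k ω} : ℝ) / (t ^ α * ℓ s) =
      ({k : ℕ | q t ≤ Z t k ω}.ncard : ℝ) / (s ^ α * ℓ s) := by
    rw [Nat.card_coe_set_eq, hsdef, Real.div_rpow ht.le hqpos.le]
    have := Real.rpow_pos_of_pos hqpos α
    have := Real.rpow_pos_of_pos ht α
    have := hℓpos _ hspos
    field_simp
  rw [e] at hω
  rw [← mul_div_assoc, ← sub_div] at b1
  rw [← mul_div_assoc, ← add_div] at b2
  have k1' := div_le_div_of_nonneg_right k1 hL.le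
  have k2' := div_le_div_of_nonneg_right k2 hL.le
  refine absurd hω (not_lt.2 (abs_le.2 ⟨?_, ?_⟩)) <;> linarith
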